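/- For any d point sets S_1, ..., S_d in R^2, each of size n and in general position, one can add at most n/2 + 3 Steiner points to each set so that the d augmented sets admit pairwise compatible (d-way compatible) triangulations; the number of Steiner points per set is independent of d. -/

import Mathlib

noncomputable section
open scoped Classical

/-- The Euclidean plane. -/
abbrev Pt : Type := EuclideanSpace ℝ (Fin 2)

/-- `a`, `b`, `c` are in clockwise orientation (negative signed area). -/
def cwOriented (a b c : Pt) : Prop :=
  (b 0 - a 0) * (c 1 - a 1) - (b 1 - a 1) * (c 0 - a 0) < 0

/-- The vertex set of an (ordered) triangle. -/
def triPts (t : Pt × Pt × Pt) : Set Pt := {t.1, t.2.1, t.2.2}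

/-- The closed triangle spanned by an ordered triple. -/
def triHull (t : Pt × Pt × Pt) : Set Pt := convexHull ℝ (triPts t)

/-- The open triangle spanned by an ordered triple. -/
def triInt (t : Pt × Pt × Pt) : Set Pt := interior (triHull t)

/-- A set of points is in general position if no three of its points are collinear. -/
def GenPos (A : Set Pt) : Prop :=
  ∀ p ∈ A, ∀ q ∈ A, ∀ r ∈ A, p ≠ q → p ≠ r → q ≠ r → ¬ Collinear ℝ ({p, q, r} : Set Pt)

/-- A triangulation of a finite point set `S`: a family of empty triangles, with
vertices in `S` and normalized clockwise orientation, with pairwise disjoint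
interiors, covering the convex hull of `S`, and such that every point of `S`
meeting a triangle is one of its vertices (so all points of `S` are used and
triangles are empty). -/
structure Triangulation (S : Finset Pt) where
  faces : Finset (Pt × Pt × Pt)
  verts_mem : ∀ t ∈ faces, triPts t ⊆ (S : Set Pt)
  cw_face : ∀ t ∈ faces, cwOriented t.1 t.2.1 t.2.2
  empty_face : ∀ t ∈ faces, ∀ p ∈ S, p ∈ triHull t → p ∈ triPts t
  disj : ∀ t ∈ faces, ∀ t' ∈ faces, t ≠ t' → triInt t ∩ triInt t' = ∅
  cover : (⋃ t ∈ faces, triHull t) = convexHull ℝ (S : Set Pt)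

/-- `(a,b,c)` is a (clockwise) face of the triangulation, up to cyclic rotation. -/
def IsFace {S : Finset Pt} (T : Triangulation S) (a b c : Pt) : Prop :=
  (a, b, c) ∈ T.faces ∨ (b, c, a) ∈ T.faces ∨ (c, a, b) ∈ T.faces

/-- Compatibility of two triangulations via a prescribed bijection:
clockwise-oriented triangles correspond to clockwise-oriented triangles. -/
def CompatibleVia {S T' : Finset Pt} (TS : Triangulation S) (TT : Triangulation T')
    (f : Pt → Pt) : Prop :=
  Set.BijOn f (S : Set Pt) (T' : Set Pt) ∧
    ∀ a ∈ S, ∀ b ∈ S, ∀ c ∈ S, (IsFace TS a b c ↔ IsFace TT (f a) (f b) (f c))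

/-- Two triangulations are compatible if some bijection realizes the compatibility. -/
def Compatible {S T' : Finset Pt} (TS : Triangulation S) (TT : Triangulation T') : Prop :=
  ∃ f : Pt → Pt, CompatibleVia TS TT f

/-- The number of extreme points of `S` (points on the boundary of the convex hull). -/
def hullCount (S : Finset Pt) : ℕ :=
  (S.filter (fun p => p ∈ frontier (convexHull ℝ (S : Set Pt)))).card

/-!
Two Steiner points per set suffice. Sweep the plane by parallel lines that meet each of the points
`p 0, …, p k` of a set one at a time, and place two poles `t` and `b` far away in opposite
directions on a sweep line that precedes all the points. Seen from either pole, the points then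
appear in the order of the sweep, so the triangles `t p₀ b`, `t pᵢ₊₁ pᵢ` and `pᵢ pᵢ₊₁ b` triangulate
the points together with the poles: adding `pᵢ₊₁` turns the hull triangle `t pᵢ b` into the hull
triangle `t pᵢ₊₁ b` by attaching one triangle to each of the edges `t pᵢ` and `pᵢ b`. The labels of
these triangles depend only on the number of points, so matching labels is a compatibility.
-/

section SignedArea

/-- Twice the signed area of the triangle `a b c`, negative for clockwise triangles; as a function
of `c`, its sign tells on which side of the directed line `a b` the point `c` lies. -/
def doubleArea (a b c : Pt) : ℝ := (b 0 - a 0) * (c 1 - a 1) - (b 1 - a 1) * (c 0 - a 0)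

lemma cwOriented_iff {a b c : Pt} : cwOriented a b c ↔ doubleArea a b c < 0 := Iff.rfl

@[simp] lemma doubleArea_self_left (a b : Pt) : doubleArea a a b = 0 := by unfold doubleArea; ring

@[simp] lemma doubleArea_self_outer (a b : Pt) : doubleArea a b a = 0 := by unfold doubleArea; ring

@[simp] lemma doubleArea_self_right (a b : Pt) : doubleArea a b b = 0 := by unfold doubleArea; ring

lemma doubleArea_rotate (a b c : Pt) : doubleArea b c a = doubleArea a b c := by
  unfold doubleArea; ring

lemma doubleArea_swap (a b c : Pt) : doubleArea b a c = -doubleArea a b c := by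
  unfold doubleArea; ring

lemma doubleArea_add (a b c x : Pt) :
    doubleArea a b x + doubleArea b c x + doubleArea c a x = doubleArea a b c := by
  unfold doubleArea; ring

lemma doubleArea_smul_barycentric (a b c x : Pt) :
    doubleArea a b c • x = doubleArea b c x • a + doubleArea c a x • b + doubleArea a b x • c := by
  ext j
  simp only [PiLp.add_apply, PiLp.smul_apply, smul_eq_mul, doubleArea]
  fin_cases j <;> simp only [Fin.zero_eta, Fin.mk_one] <;> ring

lemma doubleArea_plucker (o a b c d : Pt) :
    doubleArea o a b * doubleArea o c d - doubleArea o a c * doubleArea o b d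
      + doubleArea o a d * doubleArea o b c = 0 := by
  unfold doubleArea; ring

lemma cwOriented.rotate {a b c : Pt} (h : cwOriented a b c) : cwOriented b c a := by
  rwa [cwOriented_iff, doubleArea_rotate]

lemma cwOriented.doubleArea_pos {a b c : Pt} (h : cwOriented a b c) : 0 < doubleArea a c b := by
  rw [doubleArea_swap c a b, ← doubleArea_rotate c a b]
  exact neg_pos.2 h

lemma cwOriented.ne {a b c : Pt} (h : cwOriented a b c) : a ≠ b := by
  rintro rfl
  simp [cwOriented_iff] at h

/-- The linear part of the affine functional `doubleArea a b`. -/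
def edgeFunctional (a b : Pt) : Pt →L[ℝ] ℝ :=
  (b 0 - a 0) • EuclideanSpace.proj 1 - (b 1 - a 1) • EuclideanSpace.proj 0

lemma edgeFunctional_apply (a b x : Pt) :
    edgeFunctional a b x = (b 0 - a 0) * x 1 - (b 1 - a 1) * x 0 := rfl

lemma doubleArea_eq_edgeFunctional (a b x : Pt) :
    doubleArea a b x = edgeFunctional a b x - edgeFunctional a b a := by
  simp only [doubleArea, edgeFunctional_apply]
  ring

lemma edgeFunctional_ne_zero {a b : Pt} (hab : a ≠ b) : edgeFunctional a b ≠ 0 := by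
  contrapose! hab
  have h₀ : b 0 - a 0 = 0 := by simpa [edgeFunctional_apply] using congr($hab (!₂[0, 1] : Pt))
  have h₁ : a 1 - b 1 = 0 := by simpa [edgeFunctional_apply] using congr($hab (!₂[1, 0] : Pt))
  ext j
  fin_cases j
  exacts [(sub_eq_zero.1 h₀).symm, sub_eq_zero.1 h₁]

lemma convex_setOf_doubleArea_nonpos (a b : Pt) : Convex ℝ {x | doubleArea a b x ≤ 0} := by
  simp only [doubleArea_eq_edgeFunctional, sub_nonpos]
  exact convex_halfSpace_le (edgeFunctional a b).isLinear _

lemma disjoint_interior_of_separated {a b : Pt} (hab : a ≠ b) {U V : Set Pt}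
    (hU : ∀ x ∈ U, doubleArea a b x ≤ 0) (hV : ∀ x ∈ V, 0 ≤ doubleArea a b x) :
    Disjoint (interior U) (interior V) := by
  have hopen : IsOpen (edgeFunctional a b '' (interior U ∩ interior V)) :=
    (edgeFunctional a b).isOpenMap_of_ne_zero (edgeFunctional_ne_zero hab) _
      (isOpen_interior.inter isOpen_interior)
  have hsub : edgeFunctional a b '' (interior U ∩ interior V) ⊆ {edgeFunctional a b a} := by
    rintro _ ⟨x, ⟨hxU, hxV⟩, rfl⟩
    have hle := hU x (interior_subset hxU)
    have hge := hV x (interior_subset hxV)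
    rw [doubleArea_eq_edgeFunctional] at hle hge
    exact le_antisymm (sub_nonpos.1 hle) (sub_nonneg.1 hge)
  rw [Set.disjoint_iff_inter_eq_empty, ← Set.image_eq_empty (f := edgeFunctional a b),
    ← hopen.interior_eq]
  exact Set.subset_empty_iff.1 ((interior_mono hsub).trans (interior_singleton _).subset)

end SignedArea

section Triangle

lemma triPts_subset_iff {a b c : Pt} {K : Set Pt} :
    triPts (a, b, c) ⊆ K ↔ a ∈ K ∧ b ∈ K ∧ c ∈ K := by
  simp only [triPts, Set.insert_subset_iff, Set.singleton_subset_iff]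

lemma triHull_subset {a b c : Pt} {K : Set Pt} (hK : Convex ℝ K) (ha : a ∈ K) (hb : b ∈ K)
    (hc : c ∈ K) : triHull (a, b, c) ⊆ K :=
  convexHull_min (triPts_subset_iff.2 ⟨ha, hb, hc⟩) hK

lemma triHull_subset_setOf_doubleArea_nonpos {a b c : Pt} (h : cwOriented a b c) :
    triHull (a, b, c) ⊆ {x | doubleArea a b x ≤ 0} :=
  triHull_subset (convex_setOf_doubleArea_nonpos a b) (doubleArea_self_outer a b).le
    (doubleArea_self_right a b).le (cwOriented_iff.1 h).le

lemma triHull_rotate (a b c : Pt) : triHull (b, c, a) = triHull (a, b, c) := by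
  simp only [triHull, triPts, Set.pair_comm c a, Set.insert_comm b a]

lemma mem_triHull_iff {a b c x : Pt} (h : cwOriented a b c) :
    x ∈ triHull (a, b, c) ↔
      doubleArea a b x ≤ 0 ∧ doubleArea b c x ≤ 0 ∧ doubleArea c a x ≤ 0 := by
  refine ⟨fun hx => ⟨?_, ?_, ?_⟩, fun ⟨hc, ha, hb⟩ => ?_⟩
  · exact triHull_subset_setOf_doubleArea_nonpos h hx
  · exact triHull_subset_setOf_doubleArea_nonpos h.rotate (triHull_rotate a b c ▸ hx)
  · rw [← triHull_rotate, ← triHull_rotate] at hx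
    exact triHull_subset_setOf_doubleArea_nonpos h.rotate.rotate hx
  have harea : doubleArea a b c < 0 := h
  have hvert : ∀ i, (![a, b, c] : Fin 3 → Pt) i ∈ triHull (a, b, c) := fun i =>
    subset_convexHull ℝ _ (by fin_cases i <;> simp [triPts])
  have hsum := (convex_convexHull ℝ (triPts (a, b, c))).sum_mem (t := Finset.univ)
    (w := ![doubleArea b c x / doubleArea a b c, doubleArea c a x / doubleArea a b c,
      doubleArea a b x / doubleArea a b c]) (z := ![a, b, c]) ?_ ?_ fun i _ => hvert i
  · have hx : x = (doubleArea a b c)⁻¹ •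
        (doubleArea b c x • a + doubleArea c a x • b + doubleArea a b x • c) := by
      rw [← doubleArea_smul_barycentric, inv_smul_smul₀ harea.ne]
    rw [hx]
    simpa [triHull, Fin.sum_univ_three, smul_smul, div_eq_inv_mul] using hsum
  · intro i _
    fin_cases i
    exacts [div_nonneg_of_nonpos ha harea.le, div_nonneg_of_nonpos hb harea.le,
      div_nonneg_of_nonpos hc harea.le]
  · have := doubleArea_add a b c x
    have := harea.ne
    simp only [Fin.sum_univ_three, Matrix.cons_val_zero, Matrix.cons_val_one, Matrix.cons_val]
    field_simp
    linarith

lemma doubleArea_nonneg_of_mem_triHull {a b q x : Pt} (hq : cwOriented a q b)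
    (hx : x ∈ triHull (a, q, b)) : 0 ≤ doubleArea a b x := by
  rw [doubleArea_swap]
  exact neg_nonneg.2 ((mem_triHull_iff hq).1 hx).2.2

lemma cwOriented_of_attached {t p b q : Pt} (h : cwOriented t p b) (ht : cwOriented t q p)
    (hb : cwOriented p q b) : cwOriented t q b := by
  rw [cwOriented_iff] at *
  have := doubleArea_add t q b p
  have := doubleArea_rotate p q b
  have := doubleArea_rotate b t p
  linarith

lemma triHull_subset_union_of_attached {t p b q : Pt} (h : cwOriented t p b)
    (ht : cwOriented t q p) (hb : cwOriented p q b) :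
    triHull (t, q, b) ⊆ triHull (t, q, p) ∪ (triHull (p, q, b) ∪ triHull (t, p, b)) := by
  intro x
  simp only [Set.mem_union, mem_triHull_iff h, mem_triHull_iff ht, mem_triHull_iff hb,
    mem_triHull_iff (cwOriented_of_attached h ht hb)]
  rw [cwOriented_iff] at *
  rintro ⟨htq, hqb, hbt⟩
  have hplucker : doubleArea p q b * doubleArea t p x + -doubleArea t q p * doubleArea p b x
      = doubleArea t p b * doubleArea p q x := by
    have := doubleArea_plucker p q b t x
    rw [doubleArea_swap t p x, doubleArea_rotate t p q, doubleArea_rotate t p b] at this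
    rw [doubleArea_swap q t p, ← doubleArea_rotate q t p]
    linarith
  rw [doubleArea_swap p q x, doubleArea_swap t p x, doubleArea_swap p b x]
  rcases le_or_gt (doubleArea t p x) 0 with htp | htp
  · rcases le_or_gt (doubleArea p b x) 0 with hpb | hpb
    · exact .inr (.inr ⟨htp, hpb, hbt⟩)
    · have hpq : doubleArea p q x ≤ 0 := by nlinarith
      exact .inr (.inl ⟨hpq, hqb, by linarith⟩)
  · rcases le_or_gt 0 (doubleArea p q x) with hpq | hpq
    · exact .inl ⟨htq, by linarith, by linarith⟩
    · have hpb : 0 ≤ doubleArea p b x := by nlinarith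
      exact .inr (.inl ⟨hpq.le, hqb, by linarith⟩)

lemma disjoint_triInt_of_attached {t p b q : Pt} (ht : cwOriented t q p)
    (hb : cwOriented p q b) : Disjoint (triInt (t, q, p)) (triInt (p, q, b)) :=
  disjoint_interior_of_separated ht.rotate.ne (fun _ hx => ((mem_triHull_iff ht).1 hx).2.1)
    fun x hx => by
      rw [doubleArea_swap]
      exact neg_nonneg.2 ((mem_triHull_iff hb).1 hx).1

end Triangle

section HullTriangle

/-- The directed line `a b` supports `S`, with `S` on its right, and meets `S` at most in `a`
and `b`. -/
def IsHullEdge (S : Finset Pt) (a b : Pt) : Prop :=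
  ∀ x ∈ S, x ≠ a → x ≠ b → cwOriented a b x

namespace IsHullEdge

variable {S : Finset Pt} {a b q x : Pt}

lemma doubleArea_nonpos (h : IsHullEdge S a b) (hx : x ∈ S) : doubleArea a b x ≤ 0 := by
  rcases eq_or_ne x a with rfl | hxa
  · simp
  rcases eq_or_ne x b with rfl | hxb
  · simp
  exact (cwOriented_iff.1 (h x hx hxa hxb)).le

lemma doubleArea_nonpos_of_mem_convexHull (h : IsHullEdge S a b)
    (hx : x ∈ convexHull ℝ (S : Set Pt)) : doubleArea a b x ≤ 0 :=
  convexHull_min (fun _ hy => h.doubleArea_nonpos hy) (convex_setOf_doubleArea_nonpos a b) hx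

lemma notMem_of_cwOriented (h : IsHullEdge S a b) (hq : cwOriented a q b) : q ∉ S :=
  fun hqS => (h.doubleArea_nonpos hqS).not_gt hq.doubleArea_pos

lemma mem_triPts_of_mem_attached (h : IsHullEdge S a b) (hq : cwOriented a q b)
    (hxS : x ∈ insert q S) (hx : x ∈ triHull (a, q, b)) : x ∈ triPts (a, q, b) := by
  by_contra hne
  simp only [triPts, Set.mem_insert_iff, Set.mem_singleton_iff, not_or] at hne
  have hxS := (Finset.mem_insert.1 hxS).resolve_left hne.2.1
  exact (doubleArea_nonneg_of_mem_triHull hq hx).not_gt (h x hxS hne.1 hne.2.2)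

lemma disjoint_triInt_attached (h : IsHullEdge S a b) (hq : cwOriented a q b)
    {t : Pt × Pt × Pt} (ht : triHull t ⊆ convexHull ℝ (S : Set Pt)) :
    Disjoint (triInt (a, q, b)) (triInt t) :=
  (disjoint_interior_of_separated hq.rotate.rotate.ne.symm
    (fun _ hx => h.doubleArea_nonpos_of_mem_convexHull (ht hx))
    (fun _ hx => doubleArea_nonneg_of_mem_triHull hq hx)).symm

end IsHullEdge

/-- The convex hull of `S` is the clockwise triangle `a b c` with corners in `S`, and no other
point of `S` lies on its boundary. -/
structure IsHullTriangle (S : Finset Pt) (a b c : Pt) : Prop where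
  cw : cwOriented a b c
  subset : triPts (a, b, c) ⊆ S
  edge₁ : IsHullEdge S a b
  edge₂ : IsHullEdge S b c
  edge₃ : IsHullEdge S c a

namespace IsHullTriangle

variable {S : Finset Pt} {t p b q : Pt}

lemma of_cwOriented (h : cwOriented t p b) : IsHullTriangle {t, p, b} t p b where
  cw := h
  subset := by simp [triPts]
  edge₁ x hx hxt hxp := by simp_all
  edge₂ x hx hxp hxb := by simp_all [h.rotate]
  edge₃ x hx hxb hxt := by simp_all [h.rotate.rotate]

lemma convexHull_eq (h : IsHullTriangle S t p b) :
    convexHull ℝ (S : Set Pt) = triHull (t, p, b) := by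
  refine (convexHull_min (fun x hx => ?_) (convex_convexHull ℝ _)).antisymm
    (convexHull_mono h.subset)
  exact (mem_triHull_iff h.cw).2 ⟨h.edge₁.doubleArea_nonpos hx, h.edge₂.doubleArea_nonpos hx,
    h.edge₃.doubleArea_nonpos hx⟩

lemma insert (h : IsHullTriangle S t p b) (ht : cwOriented t q p) (hb : cwOriented p q b) :
    IsHullTriangle (insert q S) t q b := by
  have hcw := cwOriented_of_attached h.cw ht hb
  have hsub := triPts_subset_iff.1 h.subset
  refine ⟨hcw, triPts_subset_iff.2 (by simp_all), fun x hx hxt hxq => ?_, fun x hx hxq hxb => ?_,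
    fun x hx hxb hxt => ?_⟩
  · rcases eq_or_ne x p with rfl | hxp
    · exact ht
    have hxS := (Finset.mem_insert.1 hx).resolve_left hxq
    have htbx : 0 ≤ doubleArea t b x := by
      rw [doubleArea_swap b t x]
      exact neg_nonneg.2 (h.edge₃.doubleArea_nonpos hxS)
    have := doubleArea_plucker t p q b x
    have := mul_nonneg ht.doubleArea_pos.le htbx
    have := mul_pos_of_neg_of_neg (cwOriented_iff.1 (h.edge₁ x hxS hxt hxp))
      (cwOriented_iff.1 hcw)
    rw [cwOriented_iff]
    refine neg_of_mul_pos_right (a := doubleArea t p b) ?_ (cwOriented_iff.1 h.cw).le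
    linarith
  · rcases eq_or_ne x p with rfl | hxp
    · exact hb.rotate
    have hxS := (Finset.mem_insert.1 hx).resolve_left hxq
    have hbtx := h.edge₃.doubleArea_nonpos hxS
    have := doubleArea_plucker b p q t x
    have := mul_nonneg_of_nonpos_of_nonpos (cwOriented_iff.1 hb.rotate.rotate).le hbtx
    have := mul_pos (h.edge₂ x hxS hxp hxb).rotate.doubleArea_pos hcw.rotate.rotate.doubleArea_pos
    rw [cwOriented_iff, doubleArea_swap b q x, neg_lt_zero]
    refine pos_of_mul_pos_right (a := doubleArea b p t) ?_ h.cw.rotate.rotate.doubleArea_pos.le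
    linarith
  · rcases Finset.mem_insert.1 hx with rfl | hxS
    · exact hcw.rotate.rotate
    · exact h.edge₃ x hxS hxb hxt

end IsHullTriangle

end HullTriangle

section Triangulation

namespace Triangulation

/-- The triangulation of the empty set, which has no faces. -/
def empty : Triangulation ∅ where
  faces := ∅
  verts_mem := by simp
  cw_face := by simp
  empty_face := by simp
  disj := by simp
  cover := by simp

/-- A clockwise triangle, as a triangulation of its corners. -/
def ofTriangle {a b c : Pt} (h : cwOriented a b c) : Triangulation {a, b, c} where
  faces := {(a, b, c)}
  verts_mem := by simp [triPts]
  cw_face := by simpa using h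
  empty_face := by simp [triPts]
  disj := by simp +contextual
  cover := by simpa using (IsHullTriangle.of_cwOriented h).convexHull_eq.symm

variable {S : Finset Pt}

lemma triHull_subset_convexHull (T : Triangulation S) {t : Pt × Pt × Pt} (ht : t ∈ T.faces) :
    triHull t ⊆ convexHull ℝ (S : Set Pt) :=
  convexHull_mono (T.verts_mem t ht)

lemma pairwiseDisjoint_triInt (T : Triangulation S) :
    (T.faces : Set (Pt × Pt × Pt)).PairwiseDisjoint triInt :=
  fun t ht t' ht' hne => Set.disjoint_iff_inter_eq_empty.2 (T.disj t ht t' ht' hne)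

lemma pairwiseDisjoint_triInt_attached (T : Triangulation S) {t p b q : Pt}
    (h : IsHullTriangle S t p b) (ht : cwOriented t q p) (hb : cwOriented p q b) :
    ((insert (t, q, p) (insert (p, q, b) T.faces) : Finset (Pt × Pt × Pt)) :
      Set (Pt × Pt × Pt)).PairwiseDisjoint triInt := by
  simp only [Finset.coe_insert]
  refine (T.pairwiseDisjoint_triInt.insert fun f hf _ => ?_).insert fun f hf _ => ?_
  · exact h.edge₂.disjoint_triInt_attached hb (T.triHull_subset_convexHull hf)
  · rcases hf with rfl | hf
    · exact disjoint_triInt_of_attached ht hb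
    · exact h.edge₁.disjoint_triInt_attached ht (T.triHull_subset_convexHull hf)

lemma biUnion_triHull_attached (T : Triangulation S) {t p b q : Pt} (h : IsHullTriangle S t p b)
    (ht : cwOriented t q p) (hb : cwOriented p q b) :
    (⋃ f ∈ insert (t, q, p) (insert (p, q, b) T.faces), triHull f) =
      convexHull ℝ ((insert q S : Finset Pt) : Set Pt) := by
  have hins := h.insert ht hb
  simp only [Finset.mem_insert, Set.iUnion_iUnion_eq_or_left, T.cover, h.convexHull_eq,
    hins.convexHull_eq]
  obtain ⟨htS, hqS, hbS⟩ := triPts_subset_iff.1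
    (hins.subset.trans (subset_convexHull ℝ _ |>.trans hins.convexHull_eq.subset))
  have hpS : p ∈ triHull (t, q, b) := hins.convexHull_eq ▸
    subset_convexHull ℝ _ (Finset.mem_insert_of_mem (triPts_subset_iff.1 h.subset).2.1)
  have hconv : Convex ℝ (triHull (t, q, b)) := convex_convexHull ℝ _
  refine Set.Subset.antisymm (Set.union_subset ?_ (Set.union_subset ?_ ?_))
    (triHull_subset_union_of_attached h.cw ht hb)
  exacts [triHull_subset hconv htS hqS hpS, triHull_subset hconv hpS hqS hbS,
    triHull_subset hconv htS hpS hbS]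

/-- Attach a point `q` beyond the two edges `t p` and `p b` of a hull triangle `t p b`. -/
def attach (T : Triangulation S) {t p b q : Pt} (h : IsHullTriangle S t p b)
    (ht : cwOriented t q p) (hb : cwOriented p q b) : Triangulation (insert q S) where
  faces := insert (t, q, p) (insert (p, q, b) T.faces)
  verts_mem := by
    obtain ⟨htS, hpS, hbS⟩ := triPts_subset_iff.1 h.subset
    simp only [Finset.forall_mem_insert, triPts_subset_iff, Finset.coe_insert]
    exact ⟨by simp_all, by simp_all, fun f hf => (T.verts_mem f hf).trans (Set.subset_insert _ _)⟩
  cw_face := by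
    simpa only [Finset.forall_mem_insert] using ⟨ht, hb, T.cw_face⟩
  empty_face := by
    simp only [Finset.mem_insert (s := insert _ T.faces), Finset.mem_insert (s := T.faces),
      forall_eq_or_imp]
    refine ⟨fun x hx => h.edge₁.mem_triPts_of_mem_attached ht hx,
      fun x hx => h.edge₂.mem_triPts_of_mem_attached hb hx, fun f hf x hx hxf => ?_⟩
    refine T.empty_face f hf x ((Finset.mem_insert.1 hx).resolve_left ?_) hxf
    rintro rfl
    exact (h.edge₁.doubleArea_nonpos_of_mem_convexHull
      (T.triHull_subset_convexHull hf hxf)).not_gt ht.doubleArea_pos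
  disj _ hf _ hf' hne := Set.disjoint_iff_inter_eq_empty.1
    (T.pairwiseDisjoint_triInt_attached h ht hb hf hf' hne)
  cover := T.biUnion_triHull_attached h ht hb

end Triangulation

end Triangulation

section Compatible

lemma Compatible.refl {S : Finset Pt} (T : Triangulation S) : Compatible T T :=
  ⟨id, Set.bijOn_id _, fun _ _ _ _ _ _ => Iff.rfl⟩

variable {V : Type*} {s : Finset V} {F : Finset (V × V × V)} {φ ψ : V → Pt}

lemma isFace_iff_of_faces_eq_image (hφ : Set.InjOn φ s) (hF : F ⊆ s ×ˢ s ×ˢ s)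
    {T : Triangulation (s.image φ)} (hT : T.faces = F.image (Prod.map φ (Prod.map φ φ)))
    {i j k : V} (hi : i ∈ s) (hj : j ∈ s) (hk : k ∈ s) :
    IsFace T (φ i) (φ j) (φ k) ↔ (i, j, k) ∈ F ∨ (j, k, i) ∈ F ∨ (k, i, j) ∈ F := by
  have mem_faces : ∀ i ∈ s, ∀ j ∈ s, ∀ k ∈ s, (φ i, φ j, φ k) ∈ T.faces ↔ (i, j, k) ∈ F := by
    intro i hi j hj k hk
    rw [hT, Finset.mem_image]
    refine ⟨?_, fun hm => ⟨_, hm, rfl⟩⟩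
    rintro ⟨⟨i', j', k'⟩, hm, heq⟩
    obtain ⟨hi', hj', hk'⟩ : i' ∈ s ∧ j' ∈ s ∧ k' ∈ s := by
      simpa only [Finset.mem_product] using hF hm
    simp only [Prod.map_apply, Prod.mk.injEq, hφ.eq_iff hi' hi, hφ.eq_iff hj' hj,
      hφ.eq_iff hk' hk] at heq
    obtain ⟨rfl, rfl, rfl⟩ := heq
    exact hm
  rw [IsFace, mem_faces i hi j hj k hk, mem_faces j hj k hk i hi, mem_faces k hk i hi j hj]

theorem compatible_of_faces_eq_image [Nonempty V] (hφ : Set.InjOn φ s) (hψ : Set.InjOn ψ s)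
    (hF : F ⊆ s ×ˢ s ×ˢ s) {T : Triangulation (s.image φ)} {T' : Triangulation (s.image ψ)}
    (hT : T.faces = F.image (Prod.map φ (Prod.map φ φ)))
    (hT' : T'.faces = F.image (Prod.map ψ (Prod.map ψ ψ))) : Compatible T T' := by
  have hinv : Set.InvOn (Function.invFunOn φ s) φ s (φ '' s) := hφ.bijOn_image.invOn_invFunOn
  refine ⟨ψ ∘ Function.invFunOn φ s, ?_, ?_⟩
  · rw [Finset.coe_image, Finset.coe_image]
    exact hψ.bijOn_image.comp ((Set.bijOn_comm hinv).2 hφ.bijOn_image)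
  · simp only [Finset.forall_mem_image, Function.comp_apply]
    intro i hi j hj k hk
    rw [hinv.1 hi, hinv.1 hj, hinv.1 hk, isFace_iff_of_faces_eq_image hφ hF hT hi hj hk,
      isFace_iff_of_faces_eq_image hψ hF hT' hi hj hk]

end Compatible

section DoubleFan

/-- The points `p 0, …, p k` together with two poles `t` and `b` are the vertices of the double fan
of clockwise triangles `t (p 0) b`, `t (p (i + 1)) (p i)` and `(p i) (p (i + 1)) b` for `i < k`. -/
structure IsDoubleFan (t b : Pt) (p : ℕ → Pt) (k : ℕ) : Prop where
  cw_zero : cwOriented t (p 0) b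
  cw_left : ∀ i < k, cwOriented t (p (i + 1)) (p i)
  cw_right : ∀ i < k, cwOriented (p i) (p (i + 1)) b

/-- Labels for the vertices of a double fan: `0` and `1` for the poles, `i + 2` for `p i`. -/
def doubleFanVertex (t b : Pt) (p : ℕ → Pt) : ℕ → Pt
  | 0 => t
  | 1 => b
  | i + 2 => p i

/-- The triangles of a double fan on the points `p 0, …, p k`, in the labels of
`doubleFanVertex`. -/
def doubleFanFaces : ℕ → Finset (ℕ × ℕ × ℕ)
  | 0 => {(0, 2, 1)}
  | k + 1 => insert (0, k + 3, k + 2) (insert (k + 2, k + 3, 1) (doubleFanFaces k))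

lemma doubleFanFaces_subset (k : ℕ) :
    doubleFanFaces k ⊆ .range (k + 3) ×ˢ .range (k + 3) ×ˢ .range (k + 3) := by
  induction k with
  | zero => simp [doubleFanFaces]
  | succ k ih =>
    have hmono : Finset.range (k + 3) ⊆ .range (k + 4) := by simp
    refine Finset.insert_subset (by simp) (Finset.insert_subset (by simp) (ih.trans ?_))
    gcongr

lemma image_doubleFanVertex_zero (t b : Pt) (p : ℕ → Pt) :
    (Finset.range 3).image (doubleFanVertex t b p) = {t, p 0, b} := by
  ext x
  simp only [Finset.range_add_one, Finset.range_zero, doubleFanVertex, Finset.image_insert,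
    Finset.image_empty, Finset.mem_insert, Finset.mem_singleton,
    Finset.notMem_empty, or_false]
  tauto

lemma image_doubleFanVertex_succ (t b : Pt) (p : ℕ → Pt) (k : ℕ) :
    (Finset.range (k + 4)).image (doubleFanVertex t b p) =
      insert (p (k + 1)) ((Finset.range (k + 3)).image (doubleFanVertex t b p)) := by
  rw [Finset.range_add_one, Finset.image_insert, doubleFanVertex]

namespace IsDoubleFan

variable {t b : Pt} {p : ℕ → Pt} {k : ℕ}

lemma of_succ (h : IsDoubleFan t b p (k + 1)) : IsDoubleFan t b p k :=
  ⟨h.cw_zero, fun i hi => h.cw_left i (by omega), fun i hi => h.cw_right i (by omega)⟩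

lemma isHullTriangle (h : IsDoubleFan t b p k) :
    IsHullTriangle ((Finset.range (k + 3)).image (doubleFanVertex t b p)) t (p k) b := by
  induction k with
  | zero =>
    rw [image_doubleFanVertex_zero]
    exact .of_cwOriented h.cw_zero
  | succ k ih =>
    rw [image_doubleFanVertex_succ]
    exact (ih h.of_succ).insert (h.cw_left k k.lt_succ_self) (h.cw_right k k.lt_succ_self)

lemma injOn_doubleFanVertex (h : IsDoubleFan t b p k) :
    Set.InjOn (doubleFanVertex t b p) (Finset.range (k + 3)) := by
  induction k with
  | zero =>
    have := h.cw_zero.ne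
    have := h.cw_zero.rotate.ne
    have := h.cw_zero.rotate.rotate.ne
    simp_all [Finset.range_add_one, doubleFanVertex, Set.injOn_insert, eq_comm]
  | succ k ih =>
    rw [Finset.range_add_one, Finset.coe_insert, Set.injOn_insert (by simp), ← Finset.coe_image]
    exact ⟨ih h.of_succ, h.of_succ.isHullTriangle.edge₁.notMem_of_cwOriented
      (h.cw_left k k.lt_succ_self)⟩

theorem exists_triangulation (h : IsDoubleFan t b p k) :
    ∃ T : Triangulation ((Finset.range (k + 3)).image (doubleFanVertex t b p)),
      T.faces = (doubleFanFaces k).image (Prod.map (doubleFanVertex t b p)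
        (Prod.map (doubleFanVertex t b p) (doubleFanVertex t b p))) := by
  induction k with
  | zero =>
    rw [image_doubleFanVertex_zero]
    exact ⟨.ofTriangle h.cw_zero, rfl⟩
  | succ k ih =>
    obtain ⟨T, hT⟩ := ih h.of_succ
    rw [image_doubleFanVertex_succ]
    refine ⟨T.attach h.of_succ.isHullTriangle (h.cw_left k k.lt_succ_self)
      (h.cw_right k k.lt_succ_self), ?_⟩
    simp [Triangulation.attach, hT, doubleFanFaces, Finset.image_insert, doubleFanVertex]

end IsDoubleFan

end DoubleFan

section Sweep

/-- The position of `x` in a sweep of the plane by the lines perpendicular to `(1, ε)`. -/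
def sweep (ε : ℝ) (x : Pt) : ℝ := x 0 + ε * x 1

lemma exists_injOn_sweep (S : Finset Pt) : ∃ ε, Set.InjOn (sweep ε) S := by
  obtain ⟨ε, hε⟩ := Infinite.exists_notMem_finset
    ((S ×ˢ S).image fun z => -(z.1 0 - z.2 0) / (z.1 1 - z.2 1))
  refine ⟨ε, fun x hx y hy hxy => ?_⟩
  simp only [sweep] at hxy
  have h₁ : x 1 = y 1 := by
    by_contra hne
    refine hε (Finset.mem_image.2 ⟨(x, y), Finset.mk_mem_product hx hy, ?_⟩)
    rw [div_eq_iff (sub_ne_zero.2 hne)]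
    linarith
  have h₀ : x 0 = y 0 := by rw [h₁] at hxy; linarith
  ext j
  fin_cases j
  exacts [h₀, h₁]

/-- The point at height `M` on the sweep line at position `c`. -/
def pole (ε c M : ℝ) : Pt := !₂[c - ε * M, M]

lemma doubleArea_pole (ε c M : ℝ) (x y : Pt) :
    doubleArea (pole ε c M) x y = doubleArea (pole ε c 0) x y + M * (sweep ε y - sweep ε x) := by
  simp only [doubleArea, pole, sweep, Matrix.cons_val_zero, Matrix.cons_val_one,
    Matrix.cons_val_fin_one]
  ring

lemma doubleArea_pole_pole_neg (ε c M : ℝ) (x : Pt) :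
    doubleArea (pole ε c M) x (pole ε c (-M)) = -(2 * M * (sweep ε x - c)) := by
  simp only [doubleArea, pole, sweep, Matrix.cons_val_zero, Matrix.cons_val_one,
    Matrix.cons_val_fin_one]
  ring

lemma cwOriented_pole {ε c M : ℝ} {x : Pt} (hM : 0 < M) (hx : c < sweep ε x) :
    cwOriented (pole ε c M) x (pole ε c (-M)) := by
  rw [cwOriented_iff, doubleArea_pole_pole_neg]
  have := sub_pos.2 hx
  exact neg_neg_of_pos (by positivity)

lemma eventually_cwOriented_pole (ε c : ℝ) {x y : Pt} (h : sweep ε x < sweep ε y) :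
    ∀ᶠ M in Filter.atTop,
      cwOriented (pole ε c M) y x ∧ cwOriented x y (pole ε c (-M)) := by
  have hlarge : ∀ C : ℝ, ∀ᶠ M in Filter.atTop, C < M * (sweep ε y - sweep ε x) :=
    (Filter.tendsto_id.atTop_mul_const (sub_pos.2 h)).eventually_gt_atTop
  filter_upwards [hlarge (doubleArea (pole ε c 0) y x), hlarge (doubleArea (pole ε c 0) x y)]
    with M htop hbot
  rw [cwOriented_iff, cwOriented_iff, doubleArea_rotate (pole ε c (-M)),
    doubleArea_pole ε c M, doubleArea_pole ε c (-M)]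
  constructor <;> linarith

lemma exists_poles (S : Finset Pt) (ε : ℝ) : ∃ t b : Pt, (∀ x ∈ S, cwOriented t x b) ∧
    ∀ x ∈ S, ∀ y ∈ S, sweep ε x < sweep ε y → cwOriented t y x ∧ cwOriented x y b := by
  obtain ⟨c, hc⟩ : ∃ c, ∀ x ∈ S, c < sweep ε x := by
    obtain ⟨m, hm⟩ := (S.image (sweep ε)).bddBelow
    exact ⟨m - 1, fun x hx => (sub_one_lt m).trans_le (hm (Finset.mem_image_of_mem _ hx))⟩
  have hpairs : ∀ᶠ M in Filter.atTop, ∀ x ∈ S, ∀ y ∈ S, sweep ε x < sweep ε y →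
      cwOriented (pole ε c M) y x ∧ cwOriented x y (pole ε c (-M)) := by
    simp only [Filter.eventually_all_finset, Filter.eventually_imp_distrib_left]
    exact fun x _ y _ => eventually_cwOriented_pole ε c
  obtain ⟨M, hpairs, hM⟩ := (hpairs.and (Filter.eventually_gt_atTop 0)).exists
  exact ⟨pole ε c M, pole ε c (-M), fun x hx => cwOriented_pole hM (hc x hx), hpairs⟩

lemma exists_strictMonoOn_enumeration {α β : Type*} [DecidableEq α] [Nonempty α] [LinearOrder β]
    {f : α → β} (s : Finset α) (hf : Set.InjOn f s) :
    ∃ p : ℕ → α, (Finset.range s.card).image p = s ∧ StrictMonoOn (f ∘ p) (Set.Iio s.card) := by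
  induction s using Finset.induction_on_max_value f with
  | empty => exact ⟨fun _ => Classical.arbitrary α, by simp, by simp [StrictMonoOn]⟩
  | insert a s ha hmax ih =>
    obtain ⟨p, hp, hmono⟩ := ih (hf.mono (Finset.coe_subset.2 (Finset.subset_insert a s)))
    have hlt : ∀ x ∈ s, f x < f a := fun x hx => (hmax x hx).lt_of_ne fun hxa =>
      ha (hf (Finset.mem_insert_of_mem hx) (Finset.mem_insert_self a s) hxa ▸ hx)
    have hold : ∀ i < s.card, Function.update p s.card a i = p i := fun i hi =>
      Function.update_of_ne hi.ne _ _
    have hmem : ∀ i < s.card, p i ∈ s := fun i hi =>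
      hp ▸ Finset.mem_image_of_mem p (Finset.mem_range.2 hi)
    rw [Finset.card_insert_of_notMem ha]
    refine ⟨Function.update p s.card a, ?_, fun i _ j hj hij => ?_⟩
    · rw [Finset.range_add_one, Finset.image_insert, Function.update_self,
        Finset.image_congr fun i hi => hold i (Finset.mem_range.1 hi), hp]
    · rw [Function.comp_apply, Function.comp_apply]
      rcases (Nat.lt_succ_iff.1 hj).lt_or_eq with hj | rfl
      · rw [hold i (hij.trans hj), hold j hj]
        exact hmono (hij.trans hj) hj hij
      · rw [hold i hij, Function.update_self]
        exact hlt _ (hmem i hij)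

theorem exists_isDoubleFan {S : Finset Pt} {k : ℕ} (hS : S.card = k + 1) :
    ∃ t b p, IsDoubleFan t b p k ∧ (Finset.range (k + 1)).image p = S := by
  obtain ⟨ε, hε⟩ := exists_injOn_sweep S
  obtain ⟨t, b, hpole, hpair⟩ := exists_poles S ε
  obtain ⟨p, hp, hmono⟩ := exists_strictMonoOn_enumeration S hε
  rw [hS] at hp hmono
  have hmem : ∀ i < k + 1, p i ∈ S := fun i hi =>
    hp ▸ Finset.mem_image_of_mem p (Finset.mem_range.2 hi)
  have hstep : ∀ i < k, cwOriented t (p (i + 1)) (p i) ∧ cwOriented (p i) (p (i + 1)) b :=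
    fun i hi => hpair _ (hmem i (by omega)) _ (hmem (i + 1) (by omega))
      (hmono (Set.mem_Iio.2 (by omega)) (Set.mem_Iio.2 (by omega)) i.lt_succ_self)
  exact ⟨t, b, p, ⟨hpole _ (hmem 0 k.succ_pos), fun i hi => (hstep i hi).1,
    fun i hi => (hstep i hi).2⟩, hp⟩

end Sweep

theorem dway_compatible_with_half_n_steiner_points_general {ι : Type*} (n : ℕ)
    (S : ι → Finset Pt) (hcard : ∀ i, (S i).card = n) :
    ∃ S' : ι → Finset Pt,
      (∀ i, S i ⊆ S' i) ∧
      (∀ i, (S' i).card ≤ n + 2) ∧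
      ∃ T : ∀ i, Triangulation (S' i), ∀ i j, Compatible (T i) (T j) := by
  rcases n with _ | k
  · obtain rfl : S = fun _ => ∅ := funext fun i => Finset.card_eq_zero.1 (hcard i)
    exact ⟨_, fun _ => subset_rfl, by simp, fun _ => .empty, fun _ _ => .refl _⟩
  · choose t b p hfan hp using fun i => exists_isDoubleFan (hcard i)
    choose T hT using fun i => (hfan i).exists_triangulation
    refine ⟨_, fun i => ?_, fun i => ?_, T, fun i j => compatible_of_faces_eq_image
      (hfan i).injOn_doubleFanVertex (hfan j).injOn_doubleFanVertex (doubleFanFaces_subset k)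
      (hT i) (hT j)⟩
    · rw [← hp i]
      exact Finset.image_subset_iff.2 fun j hj => Finset.mem_image.2
        ⟨j + 2, by simpa only [Finset.mem_range, add_lt_add_iff_right] using hj, rfl⟩
    · exact Finset.card_image_le.trans (Finset.card_range _).le

/-- Theorem 5.2: any `d` point sets of size `n` in general position admit `d`-way
(pairwise) compatible triangulations after adding at most `n/2 + 3` Steiner
points to each set; the number of Steiner points is independent of `d`. -/
theorem dway_compatible_with_half_n_steiner_points (d n : ℕ) (S : Fin d → Finset Pt)
    (hcard : ∀ i, (S i).card = n) (hgen : ∀ i, GenPos ((S i : Set Pt))) :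
    ∃ S' : Fin d → Finset Pt,
      (∀ i, S i ⊆ S' i) ∧
      (∀ i, 2 * ((S' i).card - (S i).card) ≤ n + 6) ∧
      ∃ T : ∀ i, Triangulation (S' i), ∀ i j, Compatible (T i) (T j) := by
  obtain ⟨S', hsub, hcard', T, hT⟩ :=
    dway_compatible_with_half_n_steiner_points_general n S hcard
  refine ⟨S', hsub, fun i => ?_, T, hT⟩
  have := hcard i
  have := hcard' i
  omega
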